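/- Let F : ℝⁿ → ℝⁿ be continuous and dissipative. Let ε¹, ε² > 0, and for i = 1, 2 let J^{εⁱ} : ℝⁿ → ℝⁿ satisfy J^{εⁱ}(y) − εⁱ·F(J^{εⁱ}(y)) = y for all y, with F^{εⁱ} := F ∘ J^{εⁱ}. Then for all x¹, x² ∈ ℝⁿ: ⟪x¹ − x², F^{ε¹}(x¹) − F^{ε²}(x²)⟫ ≤ (ε¹ + ε²)·(|F(x¹)| + |F(x²)|)². -/

import Mathlib

/-!
Write `a = F (J₁ x₁)` and `b = F (J₂ x₂)`. Substituting `xᵢ = Jᵢ xᵢ - εᵢ • F (Jᵢ xᵢ)` splits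
`⟪x₁ - x₂, a - b⟫` into `⟪J₁ x₁ - J₂ x₂, a - b⟫`, which is nonpositive by dissipativity, plus
`ε₁ (⟪a, b⟫ - ‖a‖²) + ε₂ (⟪a, b⟫ - ‖b‖²)`. Completing the square bounds the two brackets by
`‖b‖² / 4` and `‖a‖² / 4`, and dissipativity applied to `Jᵢ xᵢ` and `xᵢ` shows that
`‖F (Jᵢ xᵢ)‖ ≤ ‖F xᵢ‖`.
-/

section YosidaApproximation

open scoped RealInnerProductSpace

variable {E : Type*} [SeminormedAddCommGroup E] [InnerProductSpace ℝ E]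

/-- Dissipative (everywhere defined, single-valued, possibly nonlinear) operators on a real inner
product space, i.e. those whose negative is monotone. -/
def IsDissipative (F : E → E) : Prop :=
  ∀ x y, ⟪F x - F y, x - y⟫ ≤ 0

/-- `J` is a resolvent of `F` with parameter `ε`, i.e. a right inverse of `id - ε • F`. The
corresponding Yosida approximation of `F` is `F ∘ J`. -/
def IsResolvent (F : E → E) (ε : ℝ) (J : E → E) : Prop :=
  ∀ y, J y - ε • F (J y) = y

theorem norm_le_norm_of_inner_sub_left_nonpos {a b : E} (h : ⟪a - b, a⟫ ≤ 0) : ‖a‖ ≤ ‖b‖ := by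
  have h_sq : ‖a‖ * ‖a‖ ≤ ‖b‖ * ‖a‖ := calc
    ‖a‖ * ‖a‖ = ⟪a, a⟫ := (real_inner_self_eq_norm_mul_norm a).symm
    _ ≤ ⟪b, a⟫ := by rwa [inner_sub_left, sub_nonpos] at h
    _ ≤ ‖b‖ * ‖a‖ := real_inner_le_norm b a
  rcases (norm_nonneg a).eq_or_lt with ha | ha
  · exact ha ▸ norm_nonneg b
  · exact le_of_mul_le_mul_right h_sq ha

theorem inner_sub_norm_sq_le_norm_sq_div_four (a b : E) : ⟪a, b⟫ - ‖a‖ ^ 2 ≤ ‖b‖ ^ 2 / 4 := by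
  have h_square : ‖(2 : ℝ) • a - b‖ ^ 2 = 4 * ‖a‖ ^ 2 - 4 * ⟪a, b⟫ + ‖b‖ ^ 2 := by
    rw [norm_sub_sq_real, norm_smul, real_inner_smul_left, Real.norm_two]
    ring
  linarith [sq_nonneg ‖(2 : ℝ) • a - b‖]

variable {F J J₁ J₂ : E → E} {ε ε₁ ε₂ : ℝ}

theorem IsResolvent.apply_sub_self (hJ : IsResolvent F ε J) (x : E) :
    J x - x = ε • F (J x) :=
  sub_eq_iff_eq_add'.mpr (sub_eq_iff_eq_add.mp (hJ x))

theorem IsDissipative.norm_comp_resolvent_le (hF : IsDissipative F) (hε : 0 ≤ ε)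
    (hJ : IsResolvent F ε J) (x : E) : ‖F (J x)‖ ≤ ‖F x‖ := by
  rcases hε.eq_or_lt with rfl | hε
  · have h_fixed : J x = x := by simpa only [zero_smul, sub_zero] using hJ x
    rw [h_fixed]
  · have h_diss : ε * ⟪F (J x) - F x, F (J x)⟫ ≤ 0 := by
      simpa only [hJ.apply_sub_self, real_inner_smul_right] using hF (J x) x
    exact norm_le_norm_of_inner_sub_left_nonpos (nonpos_of_mul_nonpos_right h_diss hε)

theorem IsResolvent.inner_sub_comp_sub_comp (hJ₁ : IsResolvent F ε₁ J₁)
    (hJ₂ : IsResolvent F ε₂ J₂) (x₁ x₂ : E) :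
    ⟪x₁ - x₂, F (J₁ x₁) - F (J₂ x₂)⟫ =
      ⟪F (J₁ x₁) - F (J₂ x₂), J₁ x₁ - J₂ x₂⟫
        + ε₁ * (⟪F (J₁ x₁), F (J₂ x₂)⟫ - ‖F (J₁ x₁)‖ ^ 2)
        + ε₂ * (⟪F (J₂ x₂), F (J₁ x₁)⟫ - ‖F (J₂ x₂)‖ ^ 2) := by
  have h_split : x₁ - x₂ = (J₁ x₁ - J₂ x₂) - (ε₁ • F (J₁ x₁) - ε₂ • F (J₂ x₂)) := by
    rw [← hJ₁.apply_sub_self, ← hJ₂.apply_sub_self]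
    abel
  rw [h_split, inner_sub_left, real_inner_comm (F (J₁ x₁) - F (J₂ x₂)),
    inner_sub_left (ε₁ • _), real_inner_smul_left, real_inner_smul_left,
    inner_sub_right (F (J₁ x₁)), inner_sub_right (F (J₂ x₂)),
    real_inner_self_eq_norm_sq, real_inner_self_eq_norm_sq]
  ring

theorem stmt_6_general (hF : IsDissipative F) (hε₁ : 0 ≤ ε₁) (hε₂ : 0 ≤ ε₂)
    (hJ₁ : IsResolvent F ε₁ J₁) (hJ₂ : IsResolvent F ε₂ J₂) (x₁ x₂ : E) :
    ⟪x₁ - x₂, (F ∘ J₁) x₁ - (F ∘ J₂) x₂⟫ ≤ ε₁ * (‖F x₂‖ ^ 2 / 4) + ε₂ * (‖F x₁‖ ^ 2 / 4) :=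
  calc ⟪x₁ - x₂, F (J₁ x₁) - F (J₂ x₂)⟫
    _ = ⟪F (J₁ x₁) - F (J₂ x₂), J₁ x₁ - J₂ x₂⟫
          + ε₁ * (⟪F (J₁ x₁), F (J₂ x₂)⟫ - ‖F (J₁ x₁)‖ ^ 2)
          + ε₂ * (⟪F (J₂ x₂), F (J₁ x₁)⟫ - ‖F (J₂ x₂)‖ ^ 2) :=
      hJ₁.inner_sub_comp_sub_comp hJ₂ x₁ x₂
    _ ≤ 0 + ε₁ * (‖F (J₂ x₂)‖ ^ 2 / 4) + ε₂ * (‖F (J₁ x₁)‖ ^ 2 / 4) := by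
      gcongr
      · exact hF _ _
      · exact inner_sub_norm_sq_le_norm_sq_div_four _ _
      · exact inner_sub_norm_sq_le_norm_sq_div_four _ _
    _ ≤ ε₁ * (‖F x₂‖ ^ 2 / 4) + ε₂ * (‖F x₁‖ ^ 2 / 4) := by
      rw [zero_add]
      gcongr
      · exact hF.norm_comp_resolvent_le hε₂ hJ₂ x₂
      · exact hF.norm_comp_resolvent_le hε₁ hJ₁ x₁

end YosidaApproximation

/-- Cross estimate for Yosida approximations with two parameters `ε¹, ε²`. -/
theorem stmt_6 (n : ℕ)
    (F : EuclideanSpace ℝ (Fin n) → EuclideanSpace ℝ (Fin n))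
    (hFcont : Continuous F)
    (hFdiss : ∀ x y : EuclideanSpace ℝ (Fin n),
      (inner ℝ (F x - F y) (x - y) : ℝ) ≤ 0)
    (ε₁ ε₂ : ℝ) (hε₁ : 0 < ε₁) (hε₂ : 0 < ε₂)
    (J₁ J₂ : EuclideanSpace ℝ (Fin n) → EuclideanSpace ℝ (Fin n))
    (hJ₁ : ∀ y : EuclideanSpace ℝ (Fin n), J₁ y - ε₁ • F (J₁ y) = y)
    (hJ₂ : ∀ y : EuclideanSpace ℝ (Fin n), J₂ y - ε₂ • F (J₂ y) = y) :
    ∀ x₁ x₂ : EuclideanSpace ℝ (Fin n),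
      (inner ℝ (x₁ - x₂) ((F ∘ J₁) x₁ - (F ∘ J₂) x₂) : ℝ)
        ≤ (ε₁ + ε₂) * (‖F x₁‖ + ‖F x₂‖) ^ 2 := by
  refine fun x₁ x₂ => (stmt_6_general hFdiss hε₁.le hε₂.le hJ₁ hJ₂ x₁ x₂).trans ?_
  rw [add_mul]
  gcongr <;> nlinarith [norm_nonneg (F x₁), norm_nonneg (F x₂)]
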